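/- (Weak greedy algorithm: convergence of the error norms and ℓ²-summability.) In the weak greedy setting, the sequence (‖f_m‖)_{m≥0} is strictly decreasing and converges; for every m ≥ 1 one has w̃_m ≠ 0 and 2⟨f_{m−1}, w̃_m⟩ > ‖w̃_m‖², so that κ_m > 0 is well-defined; and κ_m² ‖w̃_m‖² = ‖f_{m−1}‖² − ‖f_m‖², so the series Σ_{m≥1} κ_m² ‖w̃_m‖² converges with sum at most ‖f_0‖². -/

import Mathlib

open scoped RealInnerProductSpace

/-!
Quasi-optimality together with `(1 + γ_m) α_m < 1` forces `‖f_{m-1} - w̃_m‖ < ‖f_{m-1}‖`. Expanding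
the square on the left turns this into `‖w̃_m‖² < 2⟪f_{m-1}, w̃_m⟫`, and `κ_m² ‖w̃_m‖²` is then
exactly the drop `‖f_{m-1}‖² - ‖f_m‖²`, so the series telescopes to `‖f_0‖² - (lim ‖f_m‖)²`.
-/

theorem norm_pos_of_norm_sub_lt_norm {E : Type*} [SeminormedAddCommGroup E] {f w : E}
    (h : ‖f - w‖ < ‖f‖) : 0 < ‖w‖ := by
  have htri : ‖f‖ - ‖f - w‖ ≤ ‖w‖ := by
    simpa only [sub_sub_cancel] using norm_sub_norm_le f (f - w)
  exact (sub_pos.mpr h).trans_le htri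

theorem norm_sub_lt_norm_of_quasiOptimal {E : Type*} [SeminormedAddCommGroup E] {f w : E}
    {c d : ℝ} (hf : 0 < ‖f‖) (hquasi : ‖f - w‖ ≤ c * d) (hcond : c * (d / ‖f‖) < 1) :
    ‖f - w‖ < ‖f‖ := by
  rw [← mul_div_assoc, div_lt_one hf] at hcond
  exact hquasi.trans_lt hcond

theorem exists_tendsto_of_antitone_of_nonneg {a : ℕ → ℝ} (ha : Antitone a) (h0 : ∀ n, 0 ≤ a n) :
    ∃ l, Filter.Tendsto a Filter.atTop (nhds l) :=
  ⟨_, tendsto_atTop_ciInf ha ⟨0, Set.forall_mem_range.mpr h0⟩⟩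

theorem hasSum_sub_succ_of_antitone {a : ℕ → ℝ} {l : ℝ} (ha : Antitone a)
    (hl : Filter.Tendsto a Filter.atTop (nhds l)) :
    HasSum (fun n => a n - a (n + 1)) (a 0 - l) := by
  rw [hasSum_iff_tendsto_nat_of_nonneg fun n => sub_nonneg.mpr (ha n.le_succ)]
  simpa only [Finset.sum_range_sub'] using hl.const_sub (a 0)

section InnerProductSpace

variable {E : Type*} [SeminormedAddCommGroup E] [InnerProductSpace ℝ E]

theorem norm_sub_lt_norm_iff {f w : E} : ‖f - w‖ < ‖f‖ ↔ ‖w‖ ^ 2 < 2 * ⟪f, w⟫ := by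
  rw [← sq_lt_sq₀ (norm_nonneg _) (norm_nonneg _), norm_sub_sq_real]
  constructor <;> intro h <;> linarith

/-- The factor `κ` of a correction `w` of the error `f`, normalized so that `κ² ‖w‖²` is the
decrease of the squared error whenever `w` shortens `f`. It takes the junk value `0` when the
radicand is negative, in particular when `‖w‖ = 0`. -/
noncomputable def decreaseFactor (f w : E) : ℝ :=
  √(2 * ⟪f, w⟫ / ‖w‖ ^ 2 - 1)

theorem one_lt_two_mul_inner_div_norm_sq {f w : E} (h : ‖f - w‖ < ‖f‖) :
    1 < 2 * ⟪f, w⟫ / ‖w‖ ^ 2 :=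
  (one_lt_div (pow_pos (norm_pos_of_norm_sub_lt_norm h) 2)).mpr (norm_sub_lt_norm_iff.mp h)

theorem decreaseFactor_pos {f w : E} (h : ‖f - w‖ < ‖f‖) : 0 < decreaseFactor f w :=
  Real.sqrt_pos.mpr (sub_pos.mpr (one_lt_two_mul_inner_div_norm_sq h))

theorem decreaseFactor_sq_mul_norm_sq {f w : E} (h : ‖f - w‖ < ‖f‖) :
    decreaseFactor f w ^ 2 * ‖w‖ ^ 2 = ‖f‖ ^ 2 - ‖f - w‖ ^ 2 := by
  have hw : ‖w‖ ^ 2 ≠ 0 := (pow_pos (norm_pos_of_norm_sub_lt_norm h) 2).ne'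
  have hrad : 0 ≤ 2 * ⟪f, w⟫ / ‖w‖ ^ 2 - 1 :=
    (sub_pos.mpr (one_lt_two_mul_inner_div_norm_sq h)).le
  rw [decreaseFactor, Real.sq_sqrt hrad, sub_mul, div_mul_cancel₀ _ hw, norm_sub_sq_real]
  ring

theorem hasSum_decreaseFactor_sq_mul_norm_sq {f w : ℕ → E} {L : ℝ}
    (hstep : ∀ m, f (m + 1) = f m - w m) (hlt : ∀ m, ‖f m - w m‖ < ‖f m‖)
    (hL : Filter.Tendsto (fun m => ‖f m‖) Filter.atTop (nhds L)) :
    HasSum (fun m => decreaseFactor (f m) (w m) ^ 2 * ‖w m‖ ^ 2) (‖f 0‖ ^ 2 - L ^ 2) := by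
  have hanti : Antitone fun m => ‖f m‖ ^ 2 := antitone_nat_of_succ_le fun m => by
    rw [hstep]
    gcongr
    exact (hlt m).le
  simpa only [hstep, decreaseFactor_sq_mul_norm_sq (hlt _)] using
    hasSum_sub_succ_of_antitone hanti (hL.pow 2)

theorem weak_greedy_norms_converge_general {f w : ℕ → E}
    (hstep : ∀ m, f (m + 1) = f m - w m) (hlt : ∀ m, ‖f m - w m‖ < ‖f m‖) :
    StrictAnti (fun m => ‖f m‖) ∧
    (∃ L : ℝ, Filter.Tendsto (fun m => ‖f m‖) Filter.atTop (nhds L)) ∧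
    (∀ m, w m ≠ 0) ∧
    (∀ m, ‖w m‖ ^ 2 < 2 * ⟪f m, w m⟫) ∧
    (∀ m, 0 < decreaseFactor (f m) (w m)) ∧
    (∀ m, decreaseFactor (f m) (w m) ^ 2 * ‖w m‖ ^ 2 = ‖f m‖ ^ 2 - ‖f (m + 1)‖ ^ 2) ∧
    Summable (fun m => decreaseFactor (f m) (w m) ^ 2 * ‖w m‖ ^ 2) ∧
    ∑' m, decreaseFactor (f m) (w m) ^ 2 * ‖w m‖ ^ 2 ≤ ‖f 0‖ ^ 2 := by
  have hanti : StrictAnti fun m => ‖f m‖ := strictAnti_nat_of_succ_lt fun m => hstep m ▸ hlt m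
  obtain ⟨L, hL⟩ := exists_tendsto_of_antitone_of_nonneg hanti.antitone fun m => norm_nonneg (f m)
  have hsum := hasSum_decreaseFactor_sq_mul_norm_sq hstep hlt hL
  refine ⟨hanti, ⟨L, hL⟩, fun m => ?_, fun m => norm_sub_lt_norm_iff.mp (hlt m),
    fun m => decreaseFactor_pos (hlt m), fun m => ?_, hsum.summable, ?_⟩
  · exact ne_zero_of_norm_ne_zero (norm_pos_of_norm_sub_lt_norm (hlt m)).ne'
  · rw [hstep, decreaseFactor_sq_mul_norm_sq (hlt m)]
  · exact hsum.tsum_eq.trans_le (sub_le_self _ (sq_nonneg L))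

end InnerProductSpace

/-- Weak greedy algorithm: the error norms `‖f_m‖` form a strictly decreasing convergent
sequence; each correction `w̃_m` is nonzero with `2⟪f_{m-1}, w̃_m⟫ > ‖w̃_m‖²`, so that
`κ_m > 0`; `κ_m² ‖w̃_m‖² = ‖f_{m-1}‖² - ‖f_m‖²`; and the series `Σ κ_m² ‖w̃_m‖²` converges
with sum at most `‖f_0‖²`. -/
theorem weak_greedy_norms_converge {X : Type*}
    [NormedAddCommGroup X] [InnerProductSpace ℝ X] [CompleteSpace X]
    (S : Set X) (hS : S.Nonempty) (hScone : ∀ (c : ℝ), ∀ v ∈ S, c • v ∈ S)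
    (u : X) (wt : ℕ → X) (hwtS : ∀ m : ℕ, wt (m + 1) ∈ S)
    (ut : ℕ → X) (hut0 : ut 0 = 0) (hutrec : ∀ m : ℕ, ut (m + 1) = ut m + wt (m + 1))
    (f : ℕ → X) (hf : ∀ m : ℕ, f m = u - ut m)
    (γ : ℕ → ℝ) (hγ : ∀ m : ℕ, 0 ≤ γ (m + 1))
    (hquasi : ∀ m : ℕ, ‖f m - wt (m + 1)‖ ≤ (1 + γ (m + 1)) * Metric.infDist (f m) S)
    (hfpos : ∀ m : ℕ, 0 < ‖f m‖)
    (α : ℕ → ℝ) (hα : ∀ m : ℕ, α (m + 1) = Metric.infDist (f m) S / ‖f m‖)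
    (hcond : ∀ m : ℕ, (1 + γ (m + 1)) * α (m + 1) < 1)
    (κ : ℕ → ℝ)
    (hκ : ∀ m : ℕ, κ (m + 1) = Real.sqrt (2 * ⟪f m, wt (m + 1)⟫ / ‖wt (m + 1)‖ ^ 2 - 1)) :
    StrictAnti (fun m : ℕ => ‖f m‖) ∧
    (∃ L : ℝ, Filter.Tendsto (fun m : ℕ => ‖f m‖) Filter.atTop (nhds L)) ∧
    (∀ m : ℕ, wt (m + 1) ≠ 0) ∧
    (∀ m : ℕ, ‖wt (m + 1)‖ ^ 2 < 2 * ⟪f m, wt (m + 1)⟫) ∧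
    (∀ m : ℕ, 0 < κ (m + 1)) ∧
    (∀ m : ℕ, κ (m + 1) ^ 2 * ‖wt (m + 1)‖ ^ 2 = ‖f m‖ ^ 2 - ‖f (m + 1)‖ ^ 2) ∧
    Summable (fun m : ℕ => κ (m + 1) ^ 2 * ‖wt (m + 1)‖ ^ 2) ∧
    ∑' m : ℕ, κ (m + 1) ^ 2 * ‖wt (m + 1)‖ ^ 2 ≤ ‖f 0‖ ^ 2 := by
  simp only [hκ]
  exact weak_greedy_norms_converge_general (fun m => by rw [hf, hf, hutrec, sub_add_eq_sub_sub])
    fun m => norm_sub_lt_norm_of_quasiOptimal (hfpos m) (hquasi m) (hα m ▸ hcond m)
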